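/- Let d ≥ 1 be an integer, let p, q ∈ [1,2], let s > -d/p and r > s + d/q, and set θ = (s + d/p)/(r + d(1/p - 1/q)). Then θ ∈ (0,1) and there is a constant C = C(d,p,q,s,r) > 0 such that for every Schwartz function f : ℝ^d → ℂ one has ‖f‖_s ≤ C ‖f‖_{L^p(ℝ^d)}^{1-θ} ‖|∇|^r f‖_{L^q(ℝ^d)}^{θ}, where |∇|^r f denotes the function whose Fourier transform is |ξ|^r f̂(ξ). -/

import Mathlib

open MeasureTheory Real FourierTransform
open scoped FourierTransform ENNReal

noncomputable section

/-- The `s`-norm `‖f‖ₛ = ∫_{ℝ^d} |ξ|^s |f̂(ξ)| dξ`, where `f̂ = 𝓕 f` is the Fourier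
transform `f̂(ξ) = ∫ f(x) e^{-2πi x·ξ} dx`. -/
noncomputable def sNorm (d : ℕ) (s : ℝ) (f : EuclideanSpace ℝ (Fin d) → ℂ) : ℝ :=
  ∫ ξ : EuclideanSpace ℝ (Fin d), ‖ξ‖ ^ s * ‖𝓕 f ξ‖

/-- `|∇|^r f`, the function whose Fourier transform is `|ξ|^r f̂(ξ)`, realized as the
inverse Fourier transform of `ξ ↦ |ξ|^r f̂(ξ)`. -/
noncomputable def fracLap (d : ℕ) (r : ℝ) (f : EuclideanSpace ℝ (Fin d) → ℂ) :
    EuclideanSpace ℝ (Fin d) → ℂ :=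
  𝓕⁻ fun ξ => (‖ξ‖ ^ r : ℝ) * 𝓕 f ξ

section partA
open scoped SchwartzMap
variable {d : ℕ}

theorem aux_fourier_selfadj {f g : EuclideanSpace ℝ (Fin d) → ℂ} (hf : Integrable f) (hg : Integrable g) :
    ∫ ξ, 𝓕 f ξ * g ξ = ∫ x, f x * 𝓕 g x := by
  simpa using! VectorFourier.integral_bilin_fourierIntegral_eq_flip (.mul ℂ ℂ)
    (L := innerₗ (EuclideanSpace ℝ (Fin d)))
    continuous_fourierChar continuous_inner hf hg

theorem aux_fourierInv_selfadj {f g : EuclideanSpace ℝ (Fin d) → ℂ} (hf : Integrable f) (hg : Integrable g) :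
    ∫ ξ, 𝓕⁻ f ξ * g ξ = ∫ x, f x * 𝓕⁻ g x := by
  have h := aux_fourier_selfadj hf hg.comp_neg
  rw [← integral_neg_eq_self] at h
  simp only [neg_neg, ← fourierInv_eq_fourier_neg] at h
  rw [h]
  refine integral_congr_ae (Filter.Eventually.of_forall fun x => ?_)
  simp only [fourierInv_eq_fourier_comp_neg]

theorem aux_fourier_continuous {f : EuclideanSpace ℝ (Fin d) → ℂ} (hf : Integrable f) : Continuous (𝓕 f) :=
  VectorFourier.fourierIntegral_continuous continuous_fourierChar
    (L := innerₗ (EuclideanSpace ℝ (Fin d))) continuous_inner hf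

theorem aux_fourierInv_continuous {f : EuclideanSpace ℝ (Fin d) → ℂ} (hf : Integrable f) :
    Continuous (𝓕⁻ f) := by
  have : 𝓕⁻ f = fun x => 𝓕 f (-x) := by
    ext x; exact fourierInv_eq_fourier_neg f x
  rw [this]
  exact (aux_fourier_continuous hf).comp continuous_neg

theorem aux_fourier_norm_le (f : EuclideanSpace ℝ (Fin d) → ℂ) (x : EuclideanSpace ℝ (Fin d)) :
    ‖𝓕 f x‖ ≤ ∫ y, ‖f y‖ :=
  VectorFourier.norm_fourierIntegral_le_integral_norm _ _ _ _ _

/-- If `𝓕⁻ G = g₁ + g₂` with `g₁ ∈ L¹`, `g₂ ∈ L²`, then `G = 𝓕 g₁ + 𝓕 g₂` a.e. -/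
theorem aux_ae_eq {G g₁ g₂ : EuclideanSpace ℝ (Fin d) → ℂ} (hG : Integrable G) (h₁ : Integrable g₁)
    (h₂ : MemLp g₂ 2) (h : ∀ x, 𝓕⁻ G x = g₁ x + g₂ x) :
    ∃ k : Lp ℂ 2 (volume : Measure (EuclideanSpace ℝ (Fin d))), ‖k‖ = (eLpNorm g₂ 2 volume).toReal ∧
      ∀ᵐ x, G x = 𝓕 g₁ x + k x := by
  refine ⟨𝓕 (h₂.toLp g₂), by rw [Lp.norm_fourier_eq, Lp.norm_toLp], ?_⟩
  set k : Lp ℂ 2 (volume : Measure (EuclideanSpace ℝ (Fin d))) := 𝓕 (h₂.toLp g₂) with hk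
  have hkl : LocallyIntegrable (k : EuclideanSpace ℝ (Fin d) → ℂ) := (Lp.memLp k).locallyIntegrable (by norm_num)
  have hfl : LocallyIntegrable (𝓕 g₁) := (aux_fourier_continuous h₁).locallyIntegrable
  refine ae_eq_of_integral_contDiff_smul_eq (μ := volume) hG.locallyIntegrable (hfl.add hkl) ?_
  intro φ hφ hφc
  have hφc' : HasCompactSupport (fun x => (φ x : ℂ)) := hφc.comp_left (g := fun t : ℝ => (t:ℂ)) (by simp)
  have hφ' : ContDiff ℝ ((⊤ : ℕ∞) : WithTop ℕ∞) (fun x => (φ x : ℂ)) := Complex.ofRealCLM.contDiff.comp hφ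
  set Φ : 𝓢(EuclideanSpace ℝ (Fin d), ℂ) := hφc'.toSchwartzMap hφ' with hΦ
  have hΦa : ∀ x, Φ x = (φ x : ℂ) := fun x => rfl
  set Ψ : 𝓢(EuclideanSpace ℝ (Fin d), ℂ) := 𝓕 Φ with hΨ
  have e1 : ∫ x, φ x • G x = ∫ x, 𝓕⁻ G x * Ψ x := by
    rw [aux_fourierInv_selfadj hG Ψ.integrable]
    refine integral_congr_ae (Filter.Eventually.of_forall fun x => ?_)
    have : 𝓕⁻ (Ψ : EuclideanSpace ℝ (Fin d) → ℂ) = Φ := by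
      rw [← SchwartzMap.fourierInv_coe, hΨ, FourierTransform.fourierInv_fourier_eq]
    simp only [this, hΦa, Complex.real_smul]; ring
  have e2 : ∫ x, φ x • 𝓕 g₁ x = ∫ x, g₁ x * Ψ x := by
    have := aux_fourier_selfadj h₁ Φ.integrable
    rw [← SchwartzMap.fourier_coe] at this
    rw [← this]
    refine integral_congr_ae (Filter.Eventually.of_forall fun x => ?_)
    simp only [hΦa, Complex.real_smul]; ring
  have e3 : ∫ x, φ x • k x = ∫ x, g₂ x * Ψ x := by
    have := congrArg (fun T => T Φ) (Lp.fourier_toTemperedDistribution_eq (h₂.toLp g₂))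
    simp only [TemperedDistribution.fourier_apply, Lp.toTemperedDistribution_apply] at this
    rw [← hk, ← hΨ] at this
    have h3 : ∫ x, φ x • k x = ∫ x, Φ x • k x := by
      refine integral_congr_ae (Filter.Eventually.of_forall fun x => ?_)
      simp only [hΦa, Complex.real_smul, smul_eq_mul]
    rw [h3, ← this]
    refine integral_congr_ae ?_
    filter_upwards [h₂.coeFn_toLp] with x hx
    rw [hx, smul_eq_mul, mul_comm]
  have i1 : Integrable (fun x => φ x • 𝓕 g₁ x) :=
    hfl.integrable_smul_left_of_hasCompactSupport hφ.continuous hφc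
  have i2 : Integrable (fun x => φ x • k x) :=
    hkl.integrable_smul_left_of_hasCompactSupport hφ.continuous hφc
  have j1 : Integrable (fun x => g₁ x * Ψ x) := by
    have hb : MemLp (Ψ : EuclideanSpace ℝ (Fin d) → ℂ) ⊤ := Ψ.memLp ⊤
    exact (memLp_one_iff_integrable.2 h₁).integrable_mul hb
  have j2 : Integrable (fun x => g₂ x * Ψ x) := h₂.integrable_mul (Ψ.memLp 2)
  simp only [smul_add]
  rw [integral_add i1 i2, e1, e2, e3, ← integral_add j1 j2]
  refine integral_congr_ae (Filter.Eventually.of_forall fun x => ?_)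
  simp only [h, add_mul]
end partA

section partB
variable {d : ℕ}

theorem aux_localHY (d : ℕ) (q : ℝ) (hq1 : 1 ≤ q) (hq2 : q ≤ 2) :
    ∃ C > 0, ∀ G : EuclideanSpace ℝ (Fin d) → ℂ, Integrable G →
      MemLp (𝓕⁻ G) (ENNReal.ofReal q) → ∀ N > 0,
      eLpNorm (𝓕⁻ G) (ENNReal.ofReal q) volume ≤ ENNReal.ofReal N → ∀ R > 0,
      ∫⁻ ξ in Metric.ball 0 R, ‖G ξ‖ₑ ≤ ENNReal.ofReal (C * (R ^ (d / q) * N)) := by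
  set v : ℝ := (volume (Metric.ball (0 : EuclideanSpace ℝ (Fin d)) 1)).toReal with hv
  have hv0 : 0 < v := ENNReal.toReal_pos (Metric.measure_ball_pos _ _ one_pos).ne'
    measure_ball_lt_top.ne
  refine ⟨v + √v, by positivity, ?_⟩
  intro G hG hg N hN hgN R hR
  set g : EuclideanSpace ℝ (Fin d) → ℂ := 𝓕⁻ G with hgdef
  have hq0 : 0 < q := by linarith
  have hgc : Continuous g := aux_fourierInv_continuous hG
  set lam : ℝ := R ^ (d / q) * N with hlam
  have hlam0 : 0 < lam := by positivity
  have hlamq : lam ^ q = R ^ d * N ^ q := by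
    rw [hlam, Real.mul_rpow (by positivity) hN.le, ← Real.rpow_mul hR.le, div_mul_cancel₀ _ hq0.ne',
      Real.rpow_natCast]
  have hvol : volume (Metric.ball (0 : EuclideanSpace ℝ (Fin d)) R) = ENNReal.ofReal (R ^ d * v) := by
    rw [Measure.addHaar_ball_of_pos _ _ hR, finrank_euclideanSpace_fin, ENNReal.ofReal_mul (by positivity), hv,
      ENNReal.ofReal_toReal measure_ball_lt_top.ne]
  have hqt : (ENNReal.ofReal q).toReal = q := ENNReal.toReal_ofReal hq0.le
  have hqne : ENNReal.ofReal q ≠ 0 := by simpa using hq0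
  have hInt0 : Integrable (fun x => ‖g x‖ ^ q) := by
    have := hg.integrable_norm_rpow hqne ENNReal.ofReal_ne_top
    rwa [hqt] at this
  have hI : ∫ x, ‖g x‖ ^ q ≤ N ^ q := by
    have h0 : 0 ≤ ∫ x, ‖g x‖ ^ q := integral_nonneg fun x => by positivity
    rw [hg.eLpNorm_eq_integral_rpow_norm hqne ENNReal.ofReal_ne_top, hqt,
      ENNReal.ofReal_le_ofReal_iff hN.le] at hgN
    calc _ = ((∫ x, ‖g x‖ ^ q) ^ q⁻¹) ^ q := by
            rw [← Real.rpow_mul h0, inv_mul_cancel₀ hq0.ne', Real.rpow_one]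
      _ ≤ N ^ q := by gcongr
  set S : Set (EuclideanSpace ℝ (Fin d)) := {x | lam < ‖g x‖} with hS
  have hSm : MeasurableSet S := measurableSet_lt measurable_const hgc.norm.measurable
  set g₁ := S.indicator g with hg₁
  set g₂ := Sᶜ.indicator g with hg₂
  have b1 : ∀ x, ‖g₁ x‖ ≤ lam ^ (1 - q) * ‖g x‖ ^ q := by
    intro x
    by_cases hx : x ∈ S
    · have hx' : lam < ‖g x‖ := hx
      have hgx : 0 < ‖g x‖ := hlam0.trans hx'
      rw [hg₁, Set.indicator_of_mem hx]
      calc ‖g x‖ = ‖g x‖ ^ (1 - q) * ‖g x‖ ^ q := by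
            rw [← Real.rpow_add hgx]; simp
        _ ≤ _ := by
            gcongr ?_ * _
            exact Real.rpow_le_rpow_of_nonpos hlam0 hx'.le (by linarith)
    · rw [hg₁, Set.indicator_of_notMem hx]; simp; positivity
  have b2 : ∀ x, ‖g₂ x‖ ^ 2 ≤ lam ^ (2 - q) * ‖g x‖ ^ q := by
    intro x
    by_cases hx : x ∈ S
    · rw [hg₂, Set.indicator_of_notMem (by simpa using hx)]; simp; positivity
    · have hx' : ‖g x‖ ≤ lam := not_lt.1 hx
      rw [hg₂, Set.indicator_of_mem (by simpa using hx)]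
      rcases (norm_nonneg (g x)).eq_or_lt with h0 | hgx
      · rw [← h0]; simp; positivity
      calc ‖g x‖ ^ 2 = ‖g x‖ ^ (2 - q) * ‖g x‖ ^ q := by
            rw [← Real.rpow_add hgx]; simp
        _ ≤ _ := by
            gcongr ?_ * _
            exact Real.rpow_le_rpow hgx.le hx' (by linarith)
  have m1 : AEStronglyMeasurable g₁ volume := hgc.aestronglyMeasurable.indicator hSm
  have m2 : AEStronglyMeasurable g₂ volume := hgc.aestronglyMeasurable.indicator hSm.compl
  have i1 : Integrable g₁ := (hInt0.const_mul (lam ^ (1 - q))).mono' m1 (Filter.Eventually.of_forall b1)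
  have i2' : Integrable (fun x => ‖g₂ x‖ ^ 2) :=
    (hInt0.const_mul (lam ^ (2 - q))).mono' (m2.norm.pow 2) (Filter.Eventually.of_forall fun x => by
      rw [Real.norm_of_nonneg (by positivity)]; exact b2 x)
  have i2 : MemLp g₂ 2 := (memLp_two_iff_integrable_sq_norm m2).2 i2'
  have n1 : ∫ x, ‖g₁ x‖ ≤ lam ^ (1 - q) * N ^ q := by
    calc _ ≤ ∫ x, lam ^ (1 - q) * ‖g x‖ ^ q := integral_mono i1.norm (hInt0.const_mul _) b1
      _ ≤ _ := by rw [integral_const_mul]; gcongr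
  have n2 : ∫ x, ‖g₂ x‖ ^ 2 ≤ lam ^ (2 - q) * N ^ q := by
    calc _ ≤ ∫ x, lam ^ (2 - q) * ‖g x‖ ^ q := integral_mono i2' (hInt0.const_mul _) b2
      _ ≤ _ := by rw [integral_const_mul]; gcongr
  obtain ⟨k, hk, hae⟩ := aux_ae_eq hG i1 i2 (fun x => by
    rw [hg₁, hg₂]; exact (congrFun (Set.indicator_self_add_compl S g) x).symm)
  have n3 : eLpNorm k 2 volume ≤ ENNReal.ofReal (√(lam ^ (2 - q) * N ^ q)) := by
    rw [← Lp.enorm_def, ← ofReal_norm, hk,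
      i2.eLpNorm_eq_integral_rpow_norm (by norm_num) (by norm_num)]
    rw [ENNReal.toReal_ofReal (by positivity)]
    gcongr
    rw [Real.sqrt_eq_rpow]
    simp only [ENNReal.toReal_ofNat, Real.rpow_ofNat]
    rw [one_div]
    exact Real.rpow_le_rpow (integral_nonneg fun x => by positivity) n2 (by norm_num)
  set B := Metric.ball (0 : EuclideanSpace ℝ (Fin d)) R
  have t1 : ∫⁻ ξ in B, ‖𝓕 g₁ ξ‖ₑ ≤ ENNReal.ofReal (v * lam) := by
    calc _ ≤ ∫⁻ ξ in B, ENNReal.ofReal (lam ^ (1 - q) * N ^ q) := by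
          refine lintegral_mono fun ξ => ?_
          rw [← ofReal_norm]
          exact ENNReal.ofReal_le_ofReal ((aux_fourier_norm_le g₁ ξ).trans n1)
      _ = ENNReal.ofReal (lam ^ (1 - q) * N ^ q) * ENNReal.ofReal (R ^ d * v) := by
          rw [setLIntegral_const, hvol]
      _ = ENNReal.ofReal (v * lam) := by
          rw [← ENNReal.ofReal_mul (by positivity)]
          congr 1
          calc _ = v * (lam ^ (1 - q) * (R ^ d * N ^ q)) := by ring
            _ = _ := by rw [← hlamq, ← Real.rpow_add hlam0]; simp
  have t2 : ∫⁻ ξ in B, ‖k ξ‖ₑ ≤ ENNReal.ofReal (√v * lam) := by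
    have h1 := eLpNorm_le_eLpNorm_mul_rpow_measure_univ (μ := volume.restrict B) (f := k) (p := 1) (q := 2)
      (by norm_num) (Lp.aestronglyMeasurable k).restrict
    rw [eLpNorm_one_eq_lintegral_enorm] at h1
    refine h1.trans ?_
    rw [Measure.restrict_apply_univ, hvol]
    calc _ ≤ ENNReal.ofReal (√(lam ^ (2 - q) * N ^ q)) * ENNReal.ofReal (√(R ^ d * v)) := by
          gcongr
          · exact (eLpNorm_mono_measure _ Measure.restrict_le_self).trans n3
          · rw [Real.sqrt_eq_rpow, ← ENNReal.ofReal_rpow_of_nonneg (by positivity) (by positivity)]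
            refine le_of_eq ?_
            congr 1
            norm_num
      _ = _ := by
          rw [← ENNReal.ofReal_mul (by positivity), ← Real.sqrt_mul (by positivity)]
          congr 1
          rw [show lam ^ (2 - q) * N ^ q * (R ^ d * v) = v * (lam ^ (2 - q) * (R ^ d * N ^ q)) by ring,
            ← hlamq, ← Real.rpow_add hlam0, Real.sqrt_mul hv0.le]
          congr 1
          simp [Real.sqrt_sq hlam0.le]
  calc ∫⁻ ξ in B, ‖G ξ‖ₑ ≤ ∫⁻ ξ in B, (‖𝓕 g₁ ξ‖ₑ + ‖k ξ‖ₑ) := by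
        refine lintegral_mono_ae ?_
        filter_upwards [ae_restrict_of_ae hae] with ξ hξ
        rw [hξ]; exact enorm_add_le _ _
    _ = (∫⁻ ξ in B, ‖𝓕 g₁ ξ‖ₑ) + ∫⁻ ξ in B, ‖k ξ‖ₑ :=
        lintegral_add_left (aux_fourier_continuous i1).enorm.measurable _
    _ ≤ ENNReal.ofReal (v * lam) + ENNReal.ofReal (√v * lam) := add_le_add t1 t2
    _ = _ := by
        rw [← ENNReal.ofReal_add (by positivity) (by positivity)]; congr 1; ring
end partB

section partC

theorem aux_shell_rpow {x ρ : ℝ} (e : ℝ) (hρ : 0 < ρ) (h1 : ρ / 2 ≤ x) (h2 : x ≤ ρ) :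
    x ^ e ≤ 2 ^ |e| * ρ ^ e := by
  have hx : 0 < x := by linarith
  rcases le_total 0 e with he | he
  · calc x ^ e ≤ 1 * ρ ^ e := by rw [one_mul]; exact Real.rpow_le_rpow hx.le h2 he
      _ ≤ _ := by
        gcongr
        exact Real.one_le_rpow (by norm_num) (abs_nonneg e)
  · calc x ^ e ≤ (ρ / 2) ^ e := Real.rpow_le_rpow_of_nonpos (by positivity) h1 he
      _ = _ := by
        rw [abs_of_nonpos he, Real.div_rpow hρ.le (by norm_num), Real.rpow_neg (by norm_num)]
        field_simp

variable {d : ℕ}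

/-- A closed dyadic shell. -/
def auxShell (d : ℕ) (ρ : ℝ) : Set (EuclideanSpace ℝ (Fin d)) := {ξ | ρ / 2 ≤ ‖ξ‖ ∧ ‖ξ‖ ≤ ρ}

theorem aux_shell_meas (ρ : ℝ) : MeasurableSet (auxShell d ρ) :=
  (measurableSet_le measurable_const measurable_norm).inter
    (measurableSet_le measurable_norm measurable_const)

theorem aux_shell_bound {F : EuclideanSpace ℝ (Fin d) → ℝ≥0∞} {s r b B ρ : ℝ} (hρ : 0 < ρ)
    (H : ∫⁻ ξ in Metric.ball 0 (2 * ρ), ENNReal.ofReal (‖ξ‖ ^ r) * F ξ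
      ≤ ENNReal.ofReal (B * (2 * ρ) ^ b)) :
    ∫⁻ ξ in auxShell d ρ, ENNReal.ofReal (‖ξ‖ ^ s) * F ξ ≤
      ENNReal.ofReal (2 ^ |s - r| * 2 ^ b * B * ρ ^ (s - r + b)) := by
  calc _ ≤ ∫⁻ ξ in auxShell d ρ, ENNReal.ofReal (2 ^ |s - r| * ρ ^ (s - r)) *
        (ENNReal.ofReal (‖ξ‖ ^ r) * F ξ) := by
        refine setLIntegral_mono' (aux_shell_meas ρ) fun ξ hξ => ?_
        rw [← mul_assoc, ← ENNReal.ofReal_mul (by positivity)]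
        gcongr
        have hx : 0 < ‖ξ‖ := by have := hξ.1; linarith
        calc ‖ξ‖ ^ s = ‖ξ‖ ^ (s - r) * ‖ξ‖ ^ r := by rw [← Real.rpow_add hx]; simp
          _ ≤ _ := by
            gcongr
            exact aux_shell_rpow _ hρ hξ.1 hξ.2
    _ = ENNReal.ofReal (2 ^ |s - r| * ρ ^ (s - r)) *
        ∫⁻ ξ in auxShell d ρ, (ENNReal.ofReal (‖ξ‖ ^ r) * F ξ) :=
        lintegral_const_mul' _ _ ENNReal.ofReal_ne_top
    _ ≤ ENNReal.ofReal (2 ^ |s - r| * ρ ^ (s - r)) * ENNReal.ofReal (B * (2 * ρ) ^ b) := by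
        gcongr
        refine (lintegral_mono_set ?_).trans H
        intro ξ hξ
        have := hξ.2
        simp only [Metric.mem_ball, dist_zero_right]; linarith
    _ = _ := by
        rw [← ENNReal.ofReal_mul (by positivity), Real.mul_rpow (by norm_num) hρ.le, Real.rpow_add hρ]
        congr 1; ring

theorem aux_geom {w : EuclideanSpace ℝ (Fin d) → ℝ≥0∞} {K x : ℝ} (hK : 0 ≤ K) (hx : 0 ≤ x) (hx1 : x < 1)
    {T : ℕ → Set (EuclideanSpace ℝ (Fin d))} (h : ∀ n, ∫⁻ ξ in T n, w ξ ≤ ENNReal.ofReal (K * x ^ n)) :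
    ∫⁻ ξ in ⋃ n, T n, w ξ ≤ ENNReal.ofReal (K * (1 - x)⁻¹) := by
  refine (lintegral_iUnion_le _ _).trans ((ENNReal.tsum_le_tsum h).trans (le_of_eq ?_))
  rw [← ENNReal.ofReal_tsum_of_nonneg (fun n => by positivity)
    ((summable_geometric_of_lt_one hx hx1).mul_left K), tsum_mul_left, tsum_geometric_of_lt_one hx hx1]

theorem aux_split (hd : 1 ≤ d) (s r a b : ℝ) (hα : 0 < s + a) (hβ : s - r + b < 0) :
    ∃ K > 0, ∀ (F : EuclideanSpace ℝ (Fin d) → ℝ≥0∞) (A B : ℝ), 0 < A → 0 < B →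
      (∀ R > 0, ∫⁻ ξ in Metric.ball 0 R, F ξ ≤ ENNReal.ofReal (A * R ^ a)) →
      (∀ R > 0, ∫⁻ ξ in Metric.ball 0 R, ENNReal.ofReal (‖ξ‖ ^ r) * F ξ ≤ ENNReal.ofReal (B * R ^ b)) →
      ∀ R > 0, ∫⁻ ξ, ENNReal.ofReal (‖ξ‖ ^ s) * F ξ ≤
        ENNReal.ofReal (K * (A * R ^ (s + a) + B * R ^ (s - r + b))) := by
  have x1 : ((1:ℝ)/2) ^ (s + a) < 1 := Real.rpow_lt_one (by norm_num) (by norm_num) hα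
  have x2 : (2:ℝ) ^ (s - r + b) < 1 := Real.rpow_lt_one_of_one_lt_of_neg (by norm_num) hβ
  have y1 : 0 < 1 - ((1:ℝ)/2) ^ (s + a) := by linarith
  have y2 : 0 < 1 - (2:ℝ) ^ (s - r + b) := by linarith
  set K1 : ℝ := 2 ^ |s| * 2 ^ a * (1 - ((1:ℝ)/2) ^ (s + a))⁻¹ with hK1
  set K2 : ℝ := 2 ^ |s - r| * 2 ^ b * 2 ^ (s - r + b) * (1 - (2:ℝ) ^ (s - r + b))⁻¹ with hK2
  have hK1p : 0 < K1 := by positivity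
  have hK2p : 0 < K2 := by positivity
  refine ⟨K1 + K2, by positivity, ?_⟩
  intro F A B hA hB H1 H2 R hR
  have low : ∫⁻ ξ in ⋃ n : ℕ, auxShell d (R * (1 / 2) ^ n), ENNReal.ofReal (‖ξ‖ ^ s) * F ξ ≤
      ENNReal.ofReal (2 ^ |s| * 2 ^ a * A * R ^ (s + a) * (1 - ((1:ℝ)/2) ^ (s + a))⁻¹) := by
    refine aux_geom (by positivity) (by positivity) x1 fun n => ?_
    have hρ : 0 < R * (1 / 2) ^ n := by positivity
    have := aux_shell_bound (F := F) (s := s) (r := 0) (b := a) (B := A) hρ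
      (by simpa using H1 _ (by positivity : 0 < 2 * (R * (1 / 2) ^ n)))
    refine this.trans (le_of_eq ?_)
    rw [sub_zero, Real.mul_rpow hR.le (by positivity), ← Real.rpow_natCast ((1:ℝ)/2) n, ← Real.rpow_mul (by norm_num),
      mul_comm (n:ℝ), Real.rpow_mul (by norm_num), Real.rpow_natCast]
    congr 1; ring
  have high : ∫⁻ ξ in ⋃ n : ℕ, auxShell d (R * 2 ^ (n + 1)), ENNReal.ofReal (‖ξ‖ ^ s) * F ξ ≤
      ENNReal.ofReal (2 ^ |s - r| * 2 ^ b * B * R ^ (s - r + b) * 2 ^ (s - r + b) * (1 - (2:ℝ) ^ (s - r + b))⁻¹) := by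
    refine aux_geom (by positivity) (by positivity) x2 fun n => ?_
    have hρ : 0 < R * 2 ^ (n + 1) := by positivity
    have := aux_shell_bound (F := F) (s := s) (r := r) (b := b) (B := B) hρ
      (H2 _ (by positivity : 0 < 2 * (R * 2 ^ (n + 1))))
    refine this.trans (le_of_eq ?_)
    rw [Real.mul_rpow hR.le (by positivity), ← Real.rpow_natCast (2:ℝ) (n+1), ← Real.rpow_mul (by norm_num),
      mul_comm ((n+1 : ℕ):ℝ), Real.rpow_mul (by norm_num), Real.rpow_natCast]
    congr 1; ring
  have cover : ∀ ξ : EuclideanSpace ℝ (Fin d), ξ ∈ ({0} : Set (EuclideanSpace ℝ (Fin d))) ∪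
      ((⋃ n : ℕ, auxShell d (R * (1 / 2) ^ n)) ∪ ⋃ n : ℕ, auxShell d (R * 2 ^ (n + 1))) := by
    intro ξ
    by_cases h0 : ξ = 0
    · left; exact h0
    right
    have hx : 0 < ‖ξ‖ / R := div_pos (norm_pos_iff.2 h0) hR
    have hxe : ‖ξ‖ = R * (‖ξ‖ / R) := by field_simp
    rcases le_total (‖ξ‖ / R) 1 with h1 | h1
    · left
      obtain ⟨n, hn1, hn2⟩ := exists_nat_pow_near_of_lt_one hx h1 (by norm_num : (0:ℝ) < 1/2) (by norm_num)
      refine Set.mem_iUnion.2 ⟨n, ?_, ?_⟩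
      · rw [hxe, mul_div_assoc]; refine mul_le_mul_of_nonneg_left ?_ hR.le; rw [pow_succ] at hn1; linarith
      · rw [hxe]; gcongr
    · right
      obtain ⟨n, hn1, hn2⟩ := exists_nat_pow_near h1 (by norm_num : (1:ℝ) < 2)
      refine Set.mem_iUnion.2 ⟨n, ?_, ?_⟩
      · rw [hxe, mul_div_assoc]; refine mul_le_mul_of_nonneg_left ?_ hR.le; rw [pow_succ]; linarith
      · rw [hxe]; gcongr
  have : Nontrivial (EuclideanSpace ℝ (Fin d)) := by
    have : Nonempty (Fin d) := ⟨⟨0, hd⟩⟩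
    infer_instance
  have hz : ∫⁻ ξ in ({0} : Set (EuclideanSpace ℝ (Fin d))), ENNReal.ofReal (‖ξ‖ ^ s) * F ξ = 0 :=
    setLIntegral_measure_zero _ _ (measure_singleton _)
  rw [← setLIntegral_univ, ← Set.eq_univ_of_forall cover]
  refine (lintegral_union_le _ _ _).trans ?_
  rw [hz, zero_add]
  refine (lintegral_union_le _ _ _).trans ((add_le_add low high).trans ?_)
  rw [← ENNReal.ofReal_add (by positivity) (by positivity)]
  refine ENNReal.ofReal_le_ofReal ?_
  calc _ = K1 * (A * R ^ (s + a)) + K2 * (B * R ^ (s - r + b)) := by rw [hK1, hK2]; ring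
    _ ≤ _ := by
      have p1 : 0 ≤ A * R ^ (s + a) := by positivity
      have p2 : 0 ≤ B * R ^ (s - r + b) := by positivity
      nlinarith [mul_nonneg hK1p.le p2, mul_nonneg hK2p.le p1]
end partC

section partD
open scoped SchwartzMap
variable {d : ℕ}

theorem aux_schwartz_decay (φ : 𝓢(EuclideanSpace ℝ (Fin d), ℂ)) (a : ℝ) :
    ∃ C > 0, ∀ x, ‖φ x‖ ≤ C * (1 + ‖x‖) ^ (-a) := by
  obtain ⟨N, hN⟩ := exists_nat_ge a
  set C0 := 2 ^ N * (Finset.Iic (N, 0)).sup (fun m => SchwartzMap.seminorm ℝ m.1 m.2) φ with hC0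
  refine ⟨|C0| + 1, by positivity, fun x => ?_⟩
  have h := SchwartzMap.one_add_le_sup_seminorm_apply (𝕜 := ℝ) (m := (N, 0)) le_rfl le_rfl φ x
  rw [norm_iteratedFDeriv_zero] at h
  have hp : 1 ≤ 1 + ‖x‖ := by have := norm_nonneg x; linarith
  have hp0 : 0 < 1 + ‖x‖ := by linarith
  have h2 : (1 + ‖x‖) ^ a * ‖φ x‖ ≤ |C0| + 1 := by
    calc (1 + ‖x‖) ^ a * ‖φ x‖ ≤ (1 + ‖x‖) ^ N * ‖φ x‖ := by
          gcongr
          rw [← Real.rpow_natCast]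
          exact Real.rpow_le_rpow_of_exponent_le hp hN
      _ ≤ C0 := h
      _ ≤ _ := by have := le_abs_self C0; linarith
  rw [Real.rpow_neg hp0.le, ← div_eq_mul_inv, le_div_iff₀ (by positivity)]
  linarith

theorem aux_schwartz_weight_integrable (φ : 𝓢(EuclideanSpace ℝ (Fin d), ℂ)) (a : ℝ) :
    Integrable (fun x => ‖φ x‖ * (1 + ‖x‖) ^ a) := by
  obtain ⟨C, hC, h⟩ := aux_schwartz_decay φ (a + (d + 1))
  have hi : Integrable (fun x : EuclideanSpace ℝ (Fin d) => (1 + ‖x‖) ^ (-((d:ℝ) + 1))) :=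
    integrable_one_add_norm (by simp)
  refine (hi.const_mul C).mono' ?_ (Filter.Eventually.of_forall fun x => ?_)
  · refine Continuous.aestronglyMeasurable ?_
    refine φ.continuous.norm.mul (Continuous.rpow_const (by fun_prop) fun x => Or.inl ?_)
    positivity
  · have hp0 : 0 < 1 + ‖x‖ := by positivity
    rw [Real.norm_of_nonneg (by positivity)]
    calc _ ≤ (C * (1 + ‖x‖) ^ (-(a + (d + 1)))) * (1 + ‖x‖) ^ a := by gcongr; exact h x
      _ = _ := by rw [mul_assoc, ← Real.rpow_add hp0]; congr 2; ring

/-- integrability of `|ξ|^r φ`. -/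
theorem aux_int_rpow (hd : 1 ≤ d) (φ : 𝓢(EuclideanSpace ℝ (Fin d), ℂ)) (r : ℝ) (hr : -(d:ℝ) < r) :
    Integrable (fun ξ => ‖ξ‖ ^ r * ‖φ ξ‖) := by
  obtain ⟨m, hm⟩ := exists_nat_gt r
  obtain ⟨K, hK, H⟩ := aux_split hd r m d 0 (by linarith) (by linarith)
  obtain ⟨C, hC, hb⟩ := aux_schwartz_decay φ 0
  have hm' := φ.integrable_pow_mul volume m
  set v : ℝ := (volume (Metric.ball (0 : EuclideanSpace ℝ (Fin d)) 1)).toReal with hv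
  have hv0 : 0 < v := ENNReal.toReal_pos (Metric.measure_ball_pos _ _ one_pos).ne'
    measure_ball_lt_top.ne
  have key := H (fun ξ => ‖φ ξ‖ₑ) (C * v) ((∫ x, ‖x‖ ^ m * ‖φ x‖) + 1) (by positivity)
    (by have : 0 ≤ (∫ x, ‖x‖ ^ m * ‖φ x‖) := integral_nonneg fun x => by positivity
        linarith) ?_ ?_ 1 one_pos
  · refine ⟨?_, ?_⟩
    · exact ((measurable_norm.pow_const r).mul φ.continuous.norm.measurable).aestronglyMeasurable
    · refine lt_of_eq_of_lt ?_ (key.trans_lt ENNReal.ofReal_lt_top)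
      refine lintegral_congr fun ξ => ?_
      rw [enorm_mul, enorm_norm, Real.enorm_of_nonneg (by positivity)]
  · intro R hR
    calc _ ≤ ∫⁻ ξ in Metric.ball (0 : EuclideanSpace ℝ (Fin d)) R, ENNReal.ofReal C := by
          refine lintegral_mono fun ξ => ?_
          rw [← ofReal_norm]
          exact ENNReal.ofReal_le_ofReal (by simpa using hb ξ)
      _ = _ := by
          rw [setLIntegral_const, Measure.addHaar_ball_of_pos _ _ hR, finrank_euclideanSpace_fin,
            ← ENNReal.ofReal_toReal (measure_ball_lt_top (x := (0 : EuclideanSpace ℝ (Fin d))) (r := 1)).ne,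
            ← hv, ← ENNReal.ofReal_mul (by positivity), ← ENNReal.ofReal_mul (by positivity), Real.rpow_natCast]
          congr 1; ring
  · intro R hR
    rw [Real.rpow_zero, mul_one]
    calc _ ≤ ∫⁻ ξ, ENNReal.ofReal (‖ξ‖ ^ (m:ℝ)) * ‖φ ξ‖ₑ := setLIntegral_le_lintegral _ _
      _ = ∫⁻ ξ, ENNReal.ofReal (‖ξ‖ ^ m * ‖φ ξ‖) := by
          refine lintegral_congr fun ξ => ?_
          rw [Real.rpow_natCast, ENNReal.ofReal_mul (by positivity), ofReal_norm]
      _ = ENNReal.ofReal (∫ x, ‖x‖ ^ m * ‖φ x‖) := by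
          rw [ofReal_integral_eq_lintegral_ofReal hm' (Filter.Eventually.of_forall fun x => by positivity)]
      _ ≤ _ := ENNReal.ofReal_le_ofReal (by linarith)

theorem aux_conv (A B : EuclideanSpace ℝ (Fin d) → ℂ) (hA : Integrable A) (hB : Integrable B) (t : ℝ)
    (x : EuclideanSpace ℝ (Fin d)) :
    𝓕⁻ (fun ξ => 𝓕 A (t • ξ) * B ξ) x = ∫ y, A y * 𝓕⁻ B (x - t • y) := by
  have hg : Integrable (fun ξ : EuclideanSpace ℝ (Fin d) => (𝐞 (inner ℝ ξ x)) • B ξ) := by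
    have := (fourierIntegral_convergent_iff (f := B) (-x)).2 hB
    simpa using this
  have h := VectorFourier.integral_bilin_fourierIntegral_eq_flip (.mul ℂ ℂ)
    (L := t • innerₗ (EuclideanSpace ℝ (Fin d)))
    continuous_fourierChar (by simp; fun_prop) hA hg
  simp only [ContinuousLinearMap.mul_apply'] at h
  rw [fourierInv_eq]
  calc _ = ∫ ξ, VectorFourier.fourierIntegral 𝐞 volume (t • innerₗ (EuclideanSpace ℝ (Fin d))) A ξ *
        ((𝐞 (inner ℝ ξ x)) • B ξ) := by
        refine integral_congr_ae (Filter.Eventually.of_forall fun ξ => ?_)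
        simp only [VectorFourier.fourierIntegral, fourier_eq, LinearMap.smul_apply, innerₗ_apply_apply,
          inner_smul_right, smul_eq_mul, mul_smul_comm]
    _ = _ := h
    _ = _ := by
        refine integral_congr_ae (Filter.Eventually.of_forall fun y => ?_)
        simp only [VectorFourier.fourierIntegral, fourierInv_eq, LinearMap.smul_apply, innerₗ_apply_apply,
          LinearMap.flip_apply, smul_eq_mul]
        congr 1
        refine integral_congr_ae (Filter.Eventually.of_forall fun ξ => ?_)
        simp only [inner_sub_right, inner_smul_right, smul_smul, real_inner_comm ξ y]
        rw [← AddChar.map_add_eq_mul]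
        congr 2; rw [real_inner_comm]; ring

theorem aux_conv_decay (A B : 𝓢(EuclideanSpace ℝ (Fin d), ℂ)) (a : ℝ) (ha : 0 ≤ a) :
    ∃ C > 0, ∀ t : ℝ, 0 ≤ t → t ≤ 1 → ∀ x,
      ‖𝓕⁻ (fun ξ => 𝓕 A (t • ξ) * 𝓕 B ξ) x‖ ≤ C * (1 + ‖x‖) ^ (-a) := by
  obtain ⟨CB, hCB, hB⟩ := aux_schwartz_decay B a
  have hi := aux_schwartz_weight_integrable A a
  have hI : 0 ≤ ∫ y, ‖A y‖ * (1 + ‖y‖) ^ a := integral_nonneg fun y => by positivity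
  refine ⟨CB * ((∫ y, ‖A y‖ * (1 + ‖y‖) ^ a) + 1), by positivity, fun t ht0 ht1 x => ?_⟩
  have h := aux_conv A ⇑(𝓕 B : 𝓢(EuclideanSpace ℝ (Fin d), ℂ)) A.integrable (𝓕 B).integrable t x
  have hinv : 𝓕⁻ ((𝓕 B : 𝓢(EuclideanSpace ℝ (Fin d), ℂ)) : EuclideanSpace ℝ (Fin d) → ℂ) = B := by
    rw [← SchwartzMap.fourierInv_coe, FourierTransform.fourierInv_fourier_eq]
  rw [hinv, ← SchwartzMap.fourier_coe] at h
  rw [h]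
  have hx0 : 0 < 1 + ‖x‖ := by positivity
  have hbd : ∀ y, ‖A y * B (x - t • y)‖ ≤ (CB * (1 + ‖x‖) ^ (-a)) * (‖A y‖ * (1 + ‖y‖) ^ a) := by
    intro y
    have hy0 : 0 < 1 + ‖y‖ := by positivity
    have hz0 : 0 < 1 + ‖x - t • y‖ := by positivity
    have tri : 1 + ‖x‖ ≤ (1 + ‖x - t • y‖) * (1 + ‖y‖) := by
      have h1 : ‖x‖ ≤ ‖x - t • y‖ + ‖t • y‖ := by simpa using norm_add_le (x - t • y) (t • y)
      have h2 : ‖t • y‖ ≤ ‖y‖ := by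
        rw [norm_smul, Real.norm_of_nonneg ht0]; nlinarith [norm_nonneg y]
      nlinarith [mul_nonneg (norm_nonneg (x - t • y)) (norm_nonneg y)]
    have h3 : (1 + ‖x - t • y‖) ^ (-a) ≤ (1 + ‖x‖) ^ (-a) * (1 + ‖y‖) ^ a := by
      have h4 := Real.rpow_le_rpow_of_nonpos hx0 tri (neg_nonpos.2 ha)
      rw [Real.mul_rpow hz0.le hy0.le] at h4
      calc _ = ((1 + ‖x - t • y‖) ^ (-a) * (1 + ‖y‖) ^ (-a)) * (1 + ‖y‖) ^ a := by
            rw [mul_assoc, ← Real.rpow_add hy0]; simp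
        _ ≤ _ := by gcongr
    rw [norm_mul]
    calc _ ≤ ‖A y‖ * (CB * ((1 + ‖x‖) ^ (-a) * (1 + ‖y‖) ^ a)) := by
          gcongr; exact (hB _).trans (by gcongr)
      _ = _ := by ring
  refine (norm_integral_le_of_norm_le (hi.const_mul _) (Filter.Eventually.of_forall hbd)).trans ?_
  rw [integral_const_mul]
  have : 0 ≤ CB * (1 + ‖x‖) ^ (-a) := by positivity
  nlinarith
end partD

section partE
open scoped SchwartzMap
variable {d : ℕ}

/-- A bump on the line supported in `(1,3)`. -/
def auxBump : ContDiffBump (2 : ℝ) := ⟨1 / 2, 1, by norm_num, by norm_num⟩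

theorem auxBump_zero {u : ℝ} (h : u ≤ 1 ∨ 3 ≤ u) : auxBump u = 0 := by
  apply auxBump.zero_of_le_dist
  change 1 ≤ _
  rw [Real.dist_eq]
  rcases h with h | h
  · rw [abs_of_nonpos (by linarith)]; linarith
  · rw [abs_of_nonneg (by linarith)]; linarith

/-- The profile `u^m * bump`. -/
def auxProf (m : ℕ) (u : ℝ) : ℝ := u ^ m * auxBump u

theorem auxProf_contDiff (m : ℕ) : ContDiff ℝ ((⊤ : ℕ∞) : WithTop ℕ∞) (auxProf m) :=
  (contDiff_id.pow m).mul auxBump.contDiff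

theorem auxProf_zero (m : ℕ) {u : ℝ} (h : u ≤ 1 ∨ 3 ≤ u) : auxProf m u = 0 := by
  simp [auxProf, auxBump_zero h]

theorem auxProf_nonneg (m : ℕ) {u : ℝ} (h : 0 ≤ u) : 0 ≤ auxProf m u :=
  mul_nonneg (by positivity) auxBump.nonneg

theorem auxProf_schwartz (d m : ℕ) :
    ∃ P : 𝓢(EuclideanSpace ℝ (Fin d), ℂ), ∀ η, P η = ((auxProf m (‖η‖ ^ 2) : ℝ) : ℂ) := by
  have h1 : ContDiff ℝ ((⊤ : ℕ∞) : WithTop ℕ∞)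
      (fun η : EuclideanSpace ℝ (Fin d) => ((auxProf m (‖η‖ ^ 2) : ℝ) : ℂ)) :=
    Complex.ofRealCLM.contDiff.comp ((auxProf_contDiff m).comp (contDiff_norm_sq ℝ))
  have h2 : HasCompactSupport
      (fun η : EuclideanSpace ℝ (Fin d) => ((auxProf m (‖η‖ ^ 2) : ℝ) : ℂ)) := by
    refine HasCompactSupport.intro (isCompact_closedBall 0 2) fun η hη => ?_
    rw [auxProf_zero m (Or.inr ?_), Complex.ofReal_zero]
    have : 2 < ‖η‖ := by simpa using hη
    nlinarith
  exact ⟨h2.toSchwartzMap h1, fun η => rfl⟩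

/-- one-dimensional kernel -/
def auxKer (m : ℕ) (r t : ℝ) : ℝ := t ^ (-r - 1) * auxProf m (t ^ 2)

theorem auxKer_integrable (m : ℕ) (r : ℝ) : IntegrableOn (auxKer m r) (Set.Ioi 0) := by
  have hc : ContinuousOn (auxKer m r) (Set.Icc 1 2) := by
    refine ContinuousOn.mul (ContinuousOn.rpow_const continuousOn_id fun x hx => Or.inl ?_) ?_
    · have h1 := hx.1
      have h2 : (0:ℝ) < x := by linarith
      exact h2.ne'
    · exact ((auxProf_contDiff m).continuous.comp (continuous_pow 2)).continuousOn
  have h1 : IntegrableOn (auxKer m r) (Set.Icc 1 2) := hc.integrableOn_Icc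
  have h2 : IntegrableOn (auxKer m r) (Set.Ioi 0 \ Set.Icc 1 2) := by
    refine (integrableOn_zero).congr_fun (fun t ht => ?_) (measurableSet_Ioi.diff measurableSet_Icc)
    have ht0 : 0 < t := ht.1
    have ht1 : t < 1 ∨ 2 < t := by
      by_contra hh
      push Not at hh
      exact ht.2 ⟨hh.1, hh.2⟩
    simp only [auxKer]
    rw [auxProf_zero, mul_zero]
    rcases ht1 with h | h
    · left; nlinarith
    · right; nlinarith
  refine (h1.union h2).mono_set fun t ht => ?_
  by_cases h : t ∈ Set.Icc (1:ℝ) 2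
  · exact Or.inl h
  · exact Or.inr ⟨ht, h⟩

theorem auxKer_pos (m : ℕ) (r : ℝ) : 0 < ∫ t in Set.Ioi 0, auxKer m r t := by
  have hnn : ∀ t ∈ Set.Ioi (0:ℝ), 0 ≤ auxKer m r t := fun t ht =>
    mul_nonneg (Real.rpow_nonneg (le_of_lt ht) _) (auxProf_nonneg m (by positivity))
  rw [setIntegral_pos_iff_support_of_nonneg_ae
    ((ae_restrict_iff' measurableSet_Ioi).2 (Filter.Eventually.of_forall hnn)) (auxKer_integrable m r)]
  refine lt_of_lt_of_le (?_ : 0 < volume (Set.Ioo (1.3:ℝ) 1.5)) (measure_mono fun t ht => ?_)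
  · rw [Real.volume_Ioo]; norm_num
  · have h1 := ht.1
    have h2 := ht.2
    have h0 : 0 < t := by linarith
    refine ⟨?_, h0⟩
    have hb : 0 < auxBump (t ^ 2) := by
      apply auxBump.pos_of_mem_ball
      rw [Metric.mem_ball, Real.dist_eq, abs_lt]
      change -1 < _ ∧ _ < 1
      constructor <;> nlinarith
    have : 0 < auxKer m r t := mul_pos (Real.rpow_pos_of_pos h0 _) (mul_pos (by positivity) hb)
    exact this.ne'

theorem auxKer_scale_eq (m : ℕ) (r : ℝ) {b : ℝ} (hb : 0 < b) {t : ℝ} (ht : 0 < t) :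
    t ^ (-r - 1) * auxProf m ((t * b) ^ 2) = b ^ (r + 1) * auxKer m r (b * t) := by
  rw [auxKer, Real.mul_rpow hb.le ht.le, mul_comm t b, ← mul_assoc, ← mul_assoc, ← Real.rpow_add hb]
  simp

theorem auxKer_scale_integrable (m : ℕ) (r : ℝ) {b : ℝ} (hb : 0 < b) :
    IntegrableOn (fun t => t ^ (-r - 1) * auxProf m ((t * b) ^ 2)) (Set.Ioi 0) := by
  have h : IntegrableOn (fun t => auxKer m r (b * t)) (Set.Ioi 0) := by
    rw [integrableOn_Ioi_comp_mul_left_iff _ _ hb, mul_zero]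
    exact auxKer_integrable m r
  have h2 : IntegrableOn (fun t => b ^ (r + 1) * auxKer m r (b * t)) (Set.Ioi 0) := Integrable.const_mul h _
  exact IntegrableOn.congr_fun h2 (fun t ht => (auxKer_scale_eq m r hb ht).symm) measurableSet_Ioi

theorem auxKer_scale_integral (m : ℕ) (r : ℝ) {b : ℝ} (hb : 0 < b) :
    ∫ t in Set.Ioi 0, t ^ (-r - 1) * auxProf m ((t * b) ^ 2) =
      (∫ t in Set.Ioi 0, auxKer m r t) * b ^ r := by
  rw [setIntegral_congr_fun measurableSet_Ioi (fun t ht => auxKer_scale_eq m r hb ht),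
    integral_const_mul, integral_comp_mul_left_Ioi _ _ hb, mul_zero, smul_eq_mul, Real.rpow_add hb,
    Real.rpow_one]
  field_simp

theorem aux_piece_low (m : ℕ) (f : 𝓢(EuclideanSpace ℝ (Fin d), ℂ)) (a : ℝ) (ha : 0 ≤ a) :
    ∃ C > 0, ∀ t : ℝ, 0 < t → t ≤ 1 → ∀ x,
      ‖𝓕⁻ (fun ξ => ((auxProf m (‖t • ξ‖ ^ 2) : ℝ) : ℂ) * 𝓕 f ξ) x‖ ≤ C * t ^ (2 * m : ℝ) * (1 + ‖x‖) ^ (-a) := by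
  obtain ⟨P, hP⟩ := auxProf_schwartz d 0
  have htg : (fun ξ : EuclideanSpace ℝ (Fin d) => (‖ξ‖ ^ 2) ^ m).HasTemperateGrowth := by
    fun_prop
  set B : 𝓢(EuclideanSpace ℝ (Fin d), ℂ) := 𝓕⁻ (SchwartzMap.smulLeftCLM ℂ (fun ξ : EuclideanSpace ℝ (Fin d) => (‖ξ‖ ^ 2) ^ m) (𝓕 f)) with hB
  obtain ⟨C, hC, h⟩ := aux_conv_decay (𝓕⁻ P) B a ha
  refine ⟨C, hC, fun t ht0 ht1 x => ?_⟩
  have h1 := h t ht0.le ht1 x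
  have e : (fun ξ => ((auxProf m (‖t • ξ‖ ^ 2) : ℝ) : ℂ) * 𝓕 f ξ) = fun ξ => ((t ^ (2 * m : ℝ) : ℝ) : ℂ) •
      ((𝓕 (𝓕⁻ P) : 𝓢(EuclideanSpace ℝ (Fin d), ℂ)) (t • ξ) * 𝓕 B ξ) := by
    ext ξ
    rw [hB, FourierTransform.fourier_fourierInv_eq, FourierTransform.fourier_fourierInv_eq, hP,
      SchwartzMap.smulLeftCLM_apply_apply htg, auxProf, auxProf, norm_smul, Real.norm_of_nonneg ht0.le]
    have : t ^ (2 * m : ℝ) = (t ^ 2) ^ m := by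
      rw [← pow_mul, ← Real.rpow_natCast]; push_cast; rfl
    rw [this, mul_pow, mul_pow]
    simp only [Complex.real_smul, smul_eq_mul]
    push_cast
    ring
  have e2 : 𝓕⁻ (fun ξ => ((auxProf m (‖t • ξ‖ ^ 2) : ℝ) : ℂ) * 𝓕 f ξ) x = ((t ^ (2 * m : ℝ) : ℝ) : ℂ) •
      𝓕⁻ (fun ξ => (𝓕 (𝓕⁻ P) : 𝓢(EuclideanSpace ℝ (Fin d), ℂ)) (t • ξ) * 𝓕 B ξ) x := by
    rw [e, fourierInv_eq, fourierInv_eq, ← integral_smul]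
    refine integral_congr_ae (Filter.Eventually.of_forall fun ξ => ?_)
    exact smul_comm _ _ _
  have htp : 0 < t ^ (2 * m : ℝ) := by positivity
  rw [e2, norm_smul, Complex.norm_real, Real.norm_of_nonneg htp.le]
  calc _ ≤ t ^ (2 * m : ℝ) * (C * (1 + ‖x‖) ^ (-a)) := by gcongr
    _ = _ := by ring

theorem aux_piece_high (m : ℕ) (f : 𝓢(EuclideanSpace ℝ (Fin d), ℂ)) (a : ℝ) (ha : 0 ≤ a) :
    ∃ C > 0, ∀ t : ℝ, 1 ≤ t → ∀ x,
      ‖𝓕⁻ (fun ξ => ((auxProf m (‖t • ξ‖ ^ 2) : ℝ) : ℂ) * 𝓕 f ξ) x‖ ≤ C * t ^ (a - d) * (1 + ‖x‖) ^ (-a) := by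
  obtain ⟨P, hP⟩ := auxProf_schwartz d m
  obtain ⟨C, hC, h⟩ := aux_conv_decay f (𝓕⁻ P) a ha
  refine ⟨C, hC, fun t ht x => ?_⟩
  have ht0 : 0 < t := by linarith
  have h1 := h t⁻¹ (by positivity) (inv_le_one_of_one_le₀ ht) (t⁻¹ • x)
  have e : 𝓕⁻ (fun ξ => ((auxProf m (‖t • ξ‖ ^ 2) : ℝ) : ℂ) * 𝓕 f ξ) x = ((t ^ d)⁻¹ : ℝ) •
      𝓕⁻ (fun ξ => 𝓕 f (t⁻¹ • ξ) * (𝓕 (𝓕⁻ P) : 𝓢(EuclideanSpace ℝ (Fin d), ℂ)) ξ) (t⁻¹ • x) := by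
    rw [fourierInv_eq, fourierInv_eq, FourierTransform.fourier_fourierInv_eq]
    have := Measure.integral_comp_smul (volume : Measure (EuclideanSpace ℝ (Fin d)))
      (fun η => 𝐞 (inner ℝ η (t⁻¹ • x)) • (𝓕 f (t⁻¹ • η) * P η)) t
    rw [finrank_euclideanSpace_fin, abs_of_pos (by positivity)] at this
    rw [← this]
    refine integral_congr_ae (Filter.Eventually.of_forall fun ξ => ?_)
    simp only [inner_smul_left, inner_smul_right, hP, smul_smul, inv_mul_cancel₀ ht0.ne', one_smul]
    rw [mul_comm (𝓕 f ξ)]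
    congr 2
    simp [ht0.ne']
  rw [e, norm_smul, Real.norm_of_nonneg (by positivity)]
  have hx : (1 + ‖t⁻¹ • x‖) ^ (-a) ≤ t ^ a * (1 + ‖x‖) ^ (-a) := by
    have h2 : (1 + ‖x‖) * t⁻¹ ≤ 1 + ‖t⁻¹ • x‖ := by
      rw [norm_smul, Real.norm_of_nonneg (by positivity)]
      have := inv_le_one_of_one_le₀ ht
      nlinarith
    have h3 := Real.rpow_le_rpow_of_nonpos (by positivity) h2 (neg_nonpos.2 ha)
    rw [Real.mul_rpow (by positivity) (by positivity), Real.inv_rpow ht0.le, Real.rpow_neg ht0.le, inv_inv] at h3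
    linarith
  calc _ ≤ (t ^ d)⁻¹ * (C * (t ^ a * (1 + ‖x‖) ^ (-a))) := by
        gcongr
        exact h1.trans (by gcongr)
    _ = _ := by
        rw [Real.rpow_sub ht0, Real.rpow_natCast]; field_simp
end partE

section partF
open scoped SchwartzMap
variable {d : ℕ}

theorem aux_ae_ne_zero (hd : 1 ≤ d) : ∀ᵐ ξ : EuclideanSpace ℝ (Fin d), ξ ≠ 0 := by
  have : Nonempty (Fin d) := ⟨⟨0, hd⟩⟩
  have : Nontrivial (EuclideanSpace ℝ (Fin d)) := inferInstance
  exact Measure.ae_ne volume 0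

theorem aux_weight_integrable (hd : 1 ≤ d) (f : 𝓢(EuclideanSpace ℝ (Fin d), ℂ)) (r : ℝ)
    (hr : -(d:ℝ) < r) : Integrable (fun ξ => ((‖ξ‖ ^ r : ℝ) : ℂ) * 𝓕 f ξ) := by
  refine (aux_int_rpow hd (𝓕 f) r hr).mono' ?_ (Filter.Eventually.of_forall fun ξ => ?_)
  · refine AEStronglyMeasurable.mul ?_ (𝓕 f).continuous.aestronglyMeasurable
    exact (Complex.measurable_ofReal.comp (measurable_norm.pow_const r)).aestronglyMeasurable
  · rw [norm_mul, Complex.norm_real, Real.norm_of_nonneg (by positivity)]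

theorem aux_repr (hd : 1 ≤ d) (f : 𝓢(EuclideanSpace ℝ (Fin d), ℂ)) (r : ℝ)
    (hr : -(d:ℝ) < r) (m : ℕ) (x : EuclideanSpace ℝ (Fin d)) :
    ∫ t in Set.Ioi (0:ℝ), ((t ^ (-r - 1) : ℝ) : ℂ) *
        𝓕⁻ (fun ξ => ((auxProf m (‖t • ξ‖ ^ 2) : ℝ) : ℂ) * 𝓕 f ξ) x =
      ((∫ t in Set.Ioi 0, auxKer m r t : ℝ) : ℂ) * 𝓕⁻ (fun ξ => ((‖ξ‖ ^ r : ℝ) : ℂ) * 𝓕 f ξ) x := by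
  set Φ : EuclideanSpace ℝ (Fin d) → ℝ → ℂ := fun ξ t =>
    ((t ^ (-r - 1) * auxProf m ((t * ‖ξ‖) ^ 2) : ℝ) : ℂ) * (𝐞 (inner ℝ ξ x) • 𝓕 f ξ) with hΦ
  have hmeas : AEStronglyMeasurable (Function.uncurry Φ)
      ((volume : Measure (EuclideanSpace ℝ (Fin d))).prod (volume.restrict (Set.Ioi (0:ℝ)))) := by
    refine AEStronglyMeasurable.mul ?_ ?_
    · refine (Complex.measurable_ofReal.comp ?_).aestronglyMeasurable
      refine (measurable_snd.pow_const _).mul ?_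
      refine (auxProf_contDiff m).continuous.measurable.comp ?_
      exact (measurable_snd.mul measurable_fst.norm).pow_const 2
    · refine Continuous.aestronglyMeasurable ?_
      refine Continuous.smul (M := Circle) (X := ℂ) ?_ ((𝓕 f).continuous.comp continuous_fst)
      exact Real.continuous_fourierChar.comp (Continuous.inner continuous_fst continuous_const)
  have hnorm : ∀ ξ : EuclideanSpace ℝ (Fin d), ∀ t ∈ Set.Ioi (0:ℝ),
      ‖Φ ξ t‖ = t ^ (-r - 1) * auxProf m ((t * ‖ξ‖) ^ 2) * ‖𝓕 f ξ‖ := by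
    intro ξ t ht
    rw [hΦ]
    simp only []
    rw [norm_mul, Complex.norm_real, Circle.norm_smul, Real.norm_of_nonneg]
    exact mul_nonneg (Real.rpow_nonneg (le_of_lt ht) _) (auxProf_nonneg m (by positivity))
  have hInt0 : Integrable (Function.uncurry Φ)
      ((volume : Measure (EuclideanSpace ℝ (Fin d))).prod (volume.restrict (Set.Ioi (0:ℝ)))) := by
    rw [integrable_prod_iff hmeas]
    constructor
    · filter_upwards [aux_ae_ne_zero hd] with ξ hξ
      have := (auxKer_scale_integrable m r (norm_pos_iff.2 hξ))
      have h3 : Integrable (fun t : ℝ => ((t ^ (-r - 1) * auxProf m ((t * ‖ξ‖) ^ 2) : ℝ) : ℂ))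
          (volume.restrict (Set.Ioi 0)) := Integrable.ofReal (𝕜 := ℂ) this
      exact h3.mul_const (𝐞 (inner ℝ ξ x) • 𝓕 f ξ)
    · refine ((aux_int_rpow hd (𝓕 f) r hr).const_mul (∫ t in Set.Ioi 0, auxKer m r t)).congr ?_
      filter_upwards [aux_ae_ne_zero hd] with ξ hξ
      simp only [Function.uncurry]
      rw [setIntegral_congr_fun measurableSet_Ioi (fun t ht => hnorm ξ t ht), integral_mul_const,
        auxKer_scale_integral m r (norm_pos_iff.2 hξ)]
      ring
  have hswap := integral_integral_swap hInt0
  have hL : ∫ ξ, ∫ t in Set.Ioi (0:ℝ), Φ ξ t =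
      ((∫ t in Set.Ioi 0, auxKer m r t : ℝ) : ℂ) * 𝓕⁻ (fun ξ => ((‖ξ‖ ^ r : ℝ) : ℂ) * 𝓕 f ξ) x := by
    rw [fourierInv_eq, ← integral_const_mul]
    refine integral_congr_ae ?_
    filter_upwards [aux_ae_ne_zero hd] with ξ hξ
    rw [hΦ]
    simp only []
    have h4 : ∫ t in Set.Ioi (0:ℝ), ((t ^ (-r - 1) * auxProf m ((t * ‖ξ‖) ^ 2) : ℝ) : ℂ) =
        (((∫ t in Set.Ioi 0, auxKer m r t) * ‖ξ‖ ^ r : ℝ) : ℂ) := by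
      rw [← auxKer_scale_integral m r (norm_pos_iff.2 hξ)]
      exact integral_ofReal
    rw [integral_mul_const, h4]
    simp only [Circle.smul_def, smul_eq_mul]
    push_cast
    ring
  rw [← hL, hswap]
  refine setIntegral_congr_fun measurableSet_Ioi fun t ht => ?_
  have ht0 : 0 < t := ht
  rw [fourierInv_eq, ← integral_const_mul]
  refine integral_congr_ae (Filter.Eventually.of_forall fun ξ => ?_)
  simp only [hΦ, Circle.smul_def, smul_eq_mul, norm_smul, Real.norm_of_nonneg ht0.le]
  push_cast
  ring

theorem aux_fracLap_decay (hd : 1 ≤ d) (f : 𝓢(EuclideanSpace ℝ (Fin d), ℂ)) (r a : ℝ)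
    (ha : 0 ≤ a) (har : a < d + r) (hr : -(d:ℝ) < r) :
    ∃ C > 0, ∀ x, ‖𝓕⁻ (fun ξ => ((‖ξ‖ ^ r : ℝ) : ℂ) * 𝓕 f ξ) x‖ ≤ C * (1 + ‖x‖) ^ (-a) := by
  obtain ⟨m, hm⟩ := exists_nat_gt r
  obtain ⟨C1, hC1, h1⟩ := aux_piece_low m f a ha
  obtain ⟨C2, hC2, h2⟩ := aux_piece_high m f a ha
  have hc := auxKer_pos m r
  set c := ∫ t in Set.Ioi 0, auxKer m r t with hcdef
  have hm0 : (0:ℝ) ≤ m := by positivity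
  let b : ℝ → ℝ := fun t => if t ≤ 1 then C1 * t ^ (2 * m - r - 1) else C2 * t ^ (a - d - r - 1)
  have hb1 : IntegrableOn b (Set.Ioc 0 1) := by
    have h := (intervalIntegral.intervalIntegrable_rpow' (a := 0) (b := 1)
      (r := 2 * m - r - 1) (by linarith))
    rw [intervalIntegrable_iff_integrableOn_Ioc_of_le zero_le_one] at h
    have h' : IntegrableOn (fun t => C1 * t ^ (2 * m - r - 1)) (Set.Ioc 0 1) := Integrable.const_mul h _
    refine IntegrableOn.congr_fun h' (fun t ht => ?_) measurableSet_Ioc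
    simp [b, ht.2]
  have hb2 : IntegrableOn b (Set.Ioi 1) := by
    have h := integrableOn_Ioi_rpow_of_lt (a := a - d - r - 1) (by linarith) (zero_lt_one (α := ℝ))
    have h' : IntegrableOn (fun t => C2 * t ^ (a - d - r - 1)) (Set.Ioi 1) := Integrable.const_mul h _
    refine IntegrableOn.congr_fun h' (fun t ht => ?_) measurableSet_Ioi
    have : ¬ t ≤ 1 := not_le.2 ht
    simp [b, this]
  have hb : IntegrableOn b (Set.Ioi 0) := by
    rw [← Set.Ioc_union_Ioi_eq_Ioi (zero_le_one (α := ℝ))]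
    exact hb1.union hb2
  have hbn : 0 ≤ ∫ t in Set.Ioi 0, b t := by
    refine setIntegral_nonneg measurableSet_Ioi fun t ht => ?_
    have ht0 : 0 < t := ht
    simp only [b]
    split_ifs <;> positivity
  refine ⟨c⁻¹ * (∫ t in Set.Ioi 0, b t) + 1, by positivity, fun x => ?_⟩
  have hrep := aux_repr hd f r hr m x
  rw [← hcdef] at hrep
  have hle : ‖∫ t in Set.Ioi (0:ℝ), ((t ^ (-r - 1) : ℝ) : ℂ) *
        𝓕⁻ (fun ξ => ((auxProf m (‖t • ξ‖ ^ 2) : ℝ) : ℂ) * 𝓕 f ξ) x‖ ≤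
      ∫ t in Set.Ioi 0, b t * (1 + ‖x‖) ^ (-a) := by
    refine norm_integral_le_of_norm_le (Integrable.mul_const hb _) ?_
    refine (ae_restrict_iff' measurableSet_Ioi).2 (Filter.Eventually.of_forall fun t ht => ?_)
    have ht0 : 0 < t := ht
    have htp : 0 < t ^ (-r - 1) := Real.rpow_pos_of_pos ht0 _
    rw [norm_mul, Complex.norm_real, Real.norm_of_nonneg htp.le]
    by_cases h : t ≤ 1
    · refine (mul_le_mul_of_nonneg_left (h1 t ht0 h x) htp.le).trans (le_of_eq ?_)
      have : b t = C1 * (t ^ (2 * m : ℝ) * t ^ (-r - 1)) := by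
        rw [← Real.rpow_add ht0]; simp only [b, h, if_true]; congr 2; ring
      rw [this]; ring
    · refine (mul_le_mul_of_nonneg_left (h2 t (le_of_not_ge h) x) htp.le).trans (le_of_eq ?_)
      have : b t = C2 * (t ^ (a - d) * t ^ (-r - 1)) := by
        rw [← Real.rpow_add ht0]; simp only [b, h, if_false]; congr 2; ring
      rw [this]; ring
  rw [hrep, integral_mul_const, norm_mul, Complex.norm_real, Real.norm_of_nonneg hc.le] at hle
  have hx : 0 < (1 + ‖x‖) ^ (-a) := by positivity
  calc _ = c⁻¹ * (c * ‖𝓕⁻ (fun ξ => ((‖ξ‖ ^ r : ℝ) : ℂ) * 𝓕 f ξ) x‖) := by field_simp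
    _ ≤ c⁻¹ * ((∫ t in Set.Ioi 0, b t) * (1 + ‖x‖) ^ (-a)) := by gcongr
    _ ≤ _ := by nlinarith

theorem aux_fracLap_memLp (hd : 1 ≤ d) (f : 𝓢(EuclideanSpace ℝ (Fin d), ℂ)) (r q : ℝ)
    (hq : 1 ≤ q) (hr : (d:ℝ) / q - d < r) :
    MemLp (𝓕⁻ (fun ξ => ((‖ξ‖ ^ r : ℝ) : ℂ) * 𝓕 f ξ)) (ENNReal.ofReal q) := by
  have hd0 : (1:ℝ) ≤ d := by exact_mod_cast hd
  have hq0 : 0 < q := by linarith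
  have hdq : 0 < (d:ℝ) / q := by positivity
  have hr' : -(d:ℝ) < r := by linarith
  set a : ℝ := (d / q + d + r) / 2 with hadef
  have ha1 : d / q < a := by rw [hadef]; linarith
  have ha2 : a < d + r := by rw [hadef]; linarith
  obtain ⟨C, hC, h⟩ := aux_fracLap_decay hd f r a (by linarith) ha2 hr'
  have hcont := aux_fourierInv_continuous (aux_weight_integrable hd f r hr')
  have haq : (d:ℝ) < a * q := by rwa [div_lt_iff₀ hq0] at ha1
  have hI : Integrable (fun x : EuclideanSpace ℝ (Fin d) => (1 + ‖x‖) ^ (-(a * q))) :=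
    integrable_one_add_norm (by rw [finrank_euclideanSpace_fin]; exact haq)
  have hb : MemLp (fun x : EuclideanSpace ℝ (Fin d) => C * (1 + ‖x‖) ^ (-a)) (ENNReal.ofReal q) := by
    refine MemLp.const_mul ?_ C
    have hc2 : Continuous (fun x : EuclideanSpace ℝ (Fin d) => (1 + ‖x‖) ^ (-a)) :=
      (continuous_const.add continuous_norm).rpow_const fun x => Or.inl (by
        have h5 : 0 < 1 + ‖x‖ := by positivity
        exact h5.ne')
    rw [← integrable_norm_rpow_iff hc2.aestronglyMeasurable (by simpa using hq0) ENNReal.ofReal_ne_top,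
      ENNReal.toReal_ofReal hq0.le]
    refine hI.congr (Filter.Eventually.of_forall fun x => ?_)
    simp only []
    rw [Real.norm_of_nonneg (by positivity), ← Real.rpow_mul (by positivity)]
    ring_nf
  exact hb.mono' hcont.aestronglyMeasurable (Filter.Eventually.of_forall h)
end partF

section partG
open scoped SchwartzMap
variable {d : ℕ}

theorem aux_opt {α β A B : ℝ} (hα : 0 < α) (hβ : 0 < β) (hA : 0 < A) (hB : 0 < B) :
    ∃ R > 0, A * R ^ α = A ^ (1 - α / (α + β)) * B ^ (α / (α + β)) ∧
      B * R ^ (-β) = A ^ (1 - α / (α + β)) * B ^ (α / (α + β)) := by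
  refine ⟨(B / A) ^ (1 / (α + β)), by positivity, ?_, ?_⟩
  · rw [← Real.rpow_mul (by positivity), Real.div_rpow hB.le hA.le, Real.rpow_sub hA, Real.rpow_one]
    have : 1 / (α + β) * α = α / (α + β) := by ring
    rw [this]; ring
  · rw [← Real.rpow_mul (by positivity)]
    have h1 : 1 / (α + β) * (-β) = α / (α + β) - 1 := by field_simp; ring
    have h2 : 1 - α / (α + β) = -(α / (α + β) - 1) := by ring
    rw [h1, h2, Real.div_rpow hB.le hA.le, Real.rpow_neg hA.le, Real.rpow_sub hB, Real.rpow_one]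
    field_simp
end partG

theorem stmt0 (d : ℕ) (hd : 1 ≤ d) (p q s r θ : ℝ)
    (hp : p ∈ Set.Icc (1 : ℝ) 2) (hq : q ∈ Set.Icc (1 : ℝ) 2)
    (hs : -(d / p) < s) (hr : s + d / q < r)
    (hθ : θ = (s + d / p) / (r + d * (1 / p - 1 / q))) :
    θ ∈ Set.Ioo (0 : ℝ) 1 ∧
    ∃ C > 0, ∀ f : SchwartzMap (EuclideanSpace ℝ (Fin d)) ℂ,
      sNorm d s (⇑f) ≤
        C * (eLpNorm (⇑f) (ENNReal.ofReal p) volume).toReal ^ (1 - θ) *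
          (eLpNorm (fracLap d r (⇑f)) (ENNReal.ofReal q) volume).toReal ^ θ := by
  have hd0 : (1:ℝ) ≤ d := by exact_mod_cast hd
  have hp0 : 0 < p := by linarith [hp.1]
  have hq0 : 0 < q := by linarith [hq.1]
  have hα : 0 < s + d / p := by linarith
  have hβ : 0 < r - s - d / q := by linarith
  have hsum : r + d * (1 / p - 1 / q) = (s + d / p) + (r - s - d / q) := by ring
  have hθ' : θ = (s + d / p) / ((s + d / p) + (r - s - d / q)) := by rw [hθ, hsum]
  have hθ0 : 0 < θ := by rw [hθ']; positivity
  have hθ1 : θ < 1 := by rw [hθ', div_lt_one (by positivity)]; linarith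
  refine ⟨⟨hθ0, hθ1⟩, ?_⟩
  obtain ⟨C1, hC1, H1⟩ := aux_localHY d p hp.1 hp.2
  obtain ⟨C2, hC2, H2⟩ := aux_localHY d q hq.1 hq.2
  obtain ⟨K, hK, HK⟩ := aux_split hd s r (d / p) (d / q) hα (by linarith)
  refine ⟨K * (C1 + C2), by positivity, fun f => ?_⟩
  have hdp : (d:ℝ) / p ≤ d := div_le_self (by positivity) hp.1
  have hrq : (d:ℝ) / q - d < r := by linarith
  have hrd : -(d:ℝ) < r := by
    have : 0 < (d:ℝ) / q := by positivity
    linarith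
  have hFf : (𝓕 (⇑f) : EuclideanSpace ℝ (Fin d) → ℂ) = ⇑(𝓕 f : SchwartzMap (EuclideanSpace ℝ (Fin d)) ℂ) :=
    (SchwartzMap.fourier_coe f)
  have hinv : 𝓕⁻ (⇑(𝓕 f : SchwartzMap (EuclideanSpace ℝ (Fin d)) ℂ)) = ⇑f := by
    rw [← SchwartzMap.fourierInv_coe, FourierTransform.fourierInv_fourier_eq]
  have hmem1 : MemLp (⇑f) (ENNReal.ofReal p) volume := f.memLp _ _
  have hlap : fracLap d r (⇑f) = 𝓕⁻ (fun ξ => ((‖ξ‖ ^ r : ℝ) : ℂ) * (𝓕 f) ξ) := by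
    simp only [fracLap, hFf]
  have hmem2 : MemLp (fracLap d r (⇑f)) (ENNReal.ofReal q) volume := by
    rw [hlap]; exact aux_fracLap_memLp hd f r q hq.1 hrq
  set n1 := (eLpNorm (⇑f) (ENNReal.ofReal p) volume).toReal with hn1
  set n2 := (eLpNorm (fracLap d r (⇑f)) (ENNReal.ofReal q) volume).toReal with hn2
  have hn1' : 0 ≤ n1 := ENNReal.toReal_nonneg
  have hn2' : 0 ≤ n2 := ENNReal.toReal_nonneg
  have key : ∀ ε > 0, sNorm d s (⇑f) ≤ K * (C1 + C2) * (n1 + ε) ^ (1 - θ) * (n2 + ε) ^ θ := by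
    intro ε hε
    have hA : 0 < n1 + ε := by linarith
    have hB : 0 < n2 + ε := by linarith
    obtain ⟨R, hR, hR1, hR2⟩ := aux_opt hα hβ hA hB
    rw [← hθ'] at hR1 hR2
    have h1 := H1 (⇑(𝓕 f : SchwartzMap (EuclideanSpace ℝ (Fin d)) ℂ)) (SchwartzMap.integrable (𝓕 f)) (by rw [hinv]; exact hmem1) (n1 + ε) hA (by
      rw [hinv, ← ENNReal.ofReal_toReal hmem1.eLpNorm_ne_top]
      exact ENNReal.ofReal_le_ofReal (by linarith))
    have h2 := H2 (fun ξ => ((‖ξ‖ ^ r : ℝ) : ℂ) * (𝓕 f) ξ) (aux_weight_integrable hd f r hrd)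
      (by rw [← hlap]; exact hmem2) (n2 + ε) hB (by
      rw [← hlap, ← ENNReal.ofReal_toReal hmem2.eLpNorm_ne_top]
      exact ENNReal.ofReal_le_ofReal (by linarith))
    have h3 := HK (fun ξ => ‖(𝓕 f) ξ‖ₑ) (C1 * (n1 + ε)) (C2 * (n2 + ε)) (by positivity) (by positivity)
      (fun R hR => (h1 R hR).trans (le_of_eq (by congr 1; ring)))
      (fun R hR => by
        refine le_trans (le_of_eq ?_) ((h2 R hR).trans (le_of_eq (by congr 1; ring)))
        refine lintegral_congr fun ξ => ?_
        rw [enorm_mul, ← ofReal_norm (((‖ξ‖ ^ r : ℝ) : ℂ)), Complex.norm_real,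
          Real.norm_of_nonneg (by positivity)]) R hR
    have hs2 : s - r + d / q = -(r - s - d / q) := by ring
    rw [hs2, mul_assoc, mul_assoc, hR1, hR2] at h3
    rw [sNorm, integral_eq_lintegral_of_nonneg_ae]
    · refine ENNReal.toReal_le_of_le_ofReal (by positivity) ?_
      refine le_trans (le_of_eq ?_) (h3.trans (le_of_eq (by congr 1; ring)))
      refine lintegral_congr fun ξ => ?_
      rw [ENNReal.ofReal_mul (by positivity), hFf, ofReal_norm]
    · exact Filter.Eventually.of_forall fun ξ => by positivity
    · rw [hFf]
      exact ((measurable_norm.pow_const s).aestronglyMeasurable).mul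
        (𝓕 f).continuous.norm.aestronglyMeasurable
  have hlim : Filter.Tendsto (fun ε : ℝ => K * (C1 + C2) * (n1 + ε) ^ (1 - θ) * (n2 + ε) ^ θ)
      (nhdsWithin 0 (Set.Ioi 0)) (nhds (K * (C1 + C2) * n1 ^ (1 - θ) * n2 ^ θ)) := by
    have hc : Continuous (fun ε : ℝ => K * (C1 + C2) * (n1 + ε) ^ (1 - θ) * (n2 + ε) ^ θ) := by
      refine (continuous_const.mul ?_).mul ?_
      · exact (continuous_const.add continuous_id).rpow_const fun _ => Or.inr (by linarith)
      · exact (continuous_const.add continuous_id).rpow_const fun _ => Or.inr hθ0.le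
    have := (hc.tendsto 0).mono_left (nhdsWithin_le_nhds (s := Set.Ioi 0))
    simpa using this
  exact ge_of_tendsto hlim (Filter.eventually_of_mem self_mem_nhdsWithin fun ε hε => key ε hε)
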